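/- arXiv:1601.05129 — 2 statements merged into one kernel-verified Lean document; each statement's English description precedes it below -/
import Mathlib

section
/- Let n ≥ 1, let A be a real symmetric positive definite n×n matrix, let b ∈ ℝⁿ, let x = A⁻¹b be the exact solution of Ax = b, and let z ∈ ℝⁿ be arbitrary with residual r = b − Az. Then ‖r‖₂²/‖A‖₂ ≤ (x−z)ᵀA(x−z) ≤ κ₂(A)·‖r‖₂²/‖A‖₂, i.e. the squared energy-norm error ‖x−z‖_A² is bounded below and above in terms of the Euclidean norm of the residual, the operator norm of A, and the condition number of A. -/
/-!
The error `e = x - z` satisfies `A e = r`. For the upper bound, `eᵀAe = rᵀA⁻¹r ≤ ‖A⁻¹‖ ‖r‖²` by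
Cauchy–Schwarz. For the lower bound, expanding the energy of `‖A‖ e - A e` and using
`(Ae)ᵀA(Ae) ≤ ‖A‖ ‖Ae‖²` gives `0 ≤ ‖A‖ (‖A‖ eᵀAe - ‖Ae‖²)`.
-/

open Matrix

section Operator

variable {𝕜 E : Type*} [RCLike 𝕜] [NormedAddCommGroup E] [InnerProductSpace 𝕜 E]

open RCLike (re)
open scoped InnerProductSpace

theorem re_inner_apply_self_le_opNorm_mul_norm_sq (T : E →L[𝕜] E) (x : E) :
    re ⟪x, T x⟫_𝕜 ≤ ‖T‖ * ‖x‖ ^ 2 :=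
  calc
    re ⟪x, T x⟫_𝕜 ≤ ‖x‖ * ‖T x‖ := re_inner_le_norm x (T x)
    _ ≤ ‖x‖ * (‖T‖ * ‖x‖) := by gcongr; exact T.le_opNorm x
    _ = ‖T‖ * ‖x‖ ^ 2 := by ring

theorem norm_apply_sq_le_opNorm_mul_re_inner_of_isPositive {T : E →L[𝕜] E} (hT : T.IsPositive)
    (x : E) : ‖T x‖ ^ 2 ≤ ‖T‖ * re ⟪x, T x⟫_𝕜 := by
  rcases (norm_nonneg T).eq_or_lt' with hT0 | hT0
  · simp [norm_eq_zero.mp hT0]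
  have expand : re ⟪(‖T‖ : 𝕜) • x - T x, T ((‖T‖ : 𝕜) • x - T x)⟫_𝕜 =
      ‖T‖ * (‖T‖ * re ⟪x, T x⟫_𝕜) - 2 * (‖T‖ * ‖T x‖ ^ 2) + re ⟪T x, T (T x)⟫_𝕜 := by
    have inner_symm : ⟪x, T (T x)⟫_𝕜 = ⟪T x, T x⟫_𝕜 := (hT.inner_left_eq_inner_right x (T x)).symm
    simp only [map_sub, map_smul, inner_sub_left, inner_sub_right, inner_smul_left,
      inner_smul_right, RCLike.conj_ofReal, RCLike.re_ofReal_mul, inner_symm, inner_self_eq_norm_sq]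
    ring
  have key : ‖T‖ * ‖T x‖ ^ 2 ≤ ‖T‖ * (‖T‖ * re ⟪x, T x⟫_𝕜) := by
    have nonneg := hT.re_inner_nonneg_right ((‖T‖ : 𝕜) • x - T x)
    linarith [re_inner_apply_self_le_opNorm_mul_norm_sq T (T x)]
  exact le_of_mul_le_mul_left key hT0

theorem energy_error_residual_bounds_general [Nontrivial E] (T : E ≃L[𝕜] E)
    (hT : (T : E →L[𝕜] E).IsPositive) (b z x r : E) (hx : x = T.symm b) (hr : r = b - T z) :
    ‖r‖ ^ 2 / ‖(T : E →L[𝕜] E)‖ ≤ re ⟪x - z, T (x - z)⟫_𝕜 ∧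
    re ⟪x - z, T (x - z)⟫_𝕜 ≤
      (‖(T : E →L[𝕜] E)‖ * ‖(T.symm : E →L[𝕜] E)‖) * (‖r‖ ^ 2 / ‖(T : E →L[𝕜] E)‖) := by
  have norm_pos : 0 < ‖(T : E →L[𝕜] E)‖ := T.norm_pos
  have residual : T (x - z) = r := by simp [hx, hr]
  have error : x - z = T.symm r := by simp [← residual]
  constructor
  · rw [div_le_iff₀' norm_pos, ← residual]
    exact norm_apply_sq_le_opNorm_mul_re_inner_of_isPositive hT (x - z)
  · calc
      re ⟪x - z, T (x - z)⟫_𝕜 = re ⟪r, T.symm r⟫_𝕜 := by rw [residual, error, inner_re_symm]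
      _ ≤ ‖(T.symm : E →L[𝕜] E)‖ * ‖r‖ ^ 2 :=
        re_inner_apply_self_le_opNorm_mul_norm_sq (T.symm : E →L[𝕜] E) r
      _ = _ := by field_simp

end Operator

section Matrix

open scoped ComplexOrder

variable {𝕜 ι : Type*} [RCLike 𝕜] [Fintype ι] [DecidableEq ι]

theorem isPositive_toEuclideanCLM_iff {A : Matrix ι ι 𝕜} :
    (toEuclideanCLM (𝕜 := 𝕜) A).IsPositive ↔ A.PosSemidef := by
  rw [← ContinuousLinearMap.isPositive_toLinearMap_iff, coe_toEuclideanCLM_eq_toEuclideanLin,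
    isPositive_toEuclideanLin_iff]

/-- The automorphism of Euclidean space given by an invertible matrix `A`: `toEuclideanCLM A`
bundled with its inverse `toEuclideanCLM A⁻¹`. -/
noncomputable def toEuclideanCLE (A : Matrix ι ι 𝕜) (hA : IsUnit A) :
    EuclideanSpace 𝕜 ι ≃L[𝕜] EuclideanSpace 𝕜 ι :=
  have hdet : IsUnit A.det := A.isUnit_iff_isUnit_det.mp hA
  .equivOfInverse' (toEuclideanCLM (𝕜 := 𝕜) A) (toEuclideanCLM (𝕜 := 𝕜) A⁻¹)
    (by rw [← ContinuousLinearMap.mul_def, ← map_mul, A.mul_nonsing_inv hdet, map_one,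
      ContinuousLinearMap.one_def])
    (by rw [← ContinuousLinearMap.mul_def, ← map_mul, A.nonsing_inv_mul hdet, map_one,
      ContinuousLinearMap.one_def])

@[simp]
theorem coe_toEuclideanCLE (A : Matrix ι ι 𝕜) (hA : IsUnit A) :
    (toEuclideanCLE A hA : EuclideanSpace 𝕜 ι →L[𝕜] EuclideanSpace 𝕜 ι) =
      toEuclideanCLM (𝕜 := 𝕜) A :=
  rfl

@[simp]
theorem coe_toEuclideanCLE_symm (A : Matrix ι ι 𝕜) (hA : IsUnit A) :
    ((toEuclideanCLE A hA).symm : EuclideanSpace 𝕜 ι →L[𝕜] EuclideanSpace 𝕜 ι) =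
      toEuclideanCLM (𝕜 := 𝕜) A⁻¹ :=
  rfl

@[simp]
theorem toEuclideanCLE_apply (A : Matrix ι ι 𝕜) (hA : IsUnit A) (v : EuclideanSpace 𝕜 ι) :
    toEuclideanCLE A hA v = toEuclideanCLM (𝕜 := 𝕜) A v :=
  rfl

end Matrix

theorem norm_toLp_sq_eq_dotProduct_self {ι : Type*} [Fintype ι] (v : ι → ℝ) :
    ‖WithLp.toLp 2 v‖ ^ 2 = v ⬝ᵥ v := by
  simp only [EuclideanSpace.real_norm_sq_eq, dotProduct, pow_two (v _)]

/-- **Residual-based bounds on the energy-norm error.** For a real symmetric positive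
definite `n × n` matrix `A` (`n ≥ 1`), right-hand side `b`, exact solution
`x = A⁻¹ b`, an arbitrary approximation `z` with residual `r = b − A z`, the squared
energy-norm error `(x−z)ᵀA(x−z)` satisfies
`‖r‖₂²/‖A‖₂ ≤ (x−z)ᵀA(x−z) ≤ κ₂(A) ‖r‖₂²/‖A‖₂`, where `κ₂(A) = ‖A‖₂‖A⁻¹‖₂`. -/
theorem energy_error_residual_bounds
    (n : ℕ) (hn : 1 ≤ n) (A : Matrix (Fin n) (Fin n) ℝ) (hA : A.PosDef)
    (b z x r : Fin n → ℝ) (hx : x = A⁻¹.mulVec b) (hr : r = b - A.mulVec z) :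
    (r ⬝ᵥ r) / ‖Matrix.toEuclideanCLM (𝕜 := ℝ) A‖ ≤ (x - z) ⬝ᵥ A.mulVec (x - z) ∧
    (x - z) ⬝ᵥ A.mulVec (x - z) ≤
      (‖Matrix.toEuclideanCLM (𝕜 := ℝ) A‖ * ‖Matrix.toEuclideanCLM (𝕜 := ℝ) A⁻¹‖) *
        ((r ⬝ᵥ r) / ‖Matrix.toEuclideanCLM (𝕜 := ℝ) A‖) := by
  have : NeZero n := ⟨Nat.one_le_iff_ne_zero.mp hn⟩
  simpa only [coe_toEuclideanCLE, coe_toEuclideanCLE_symm, toEuclideanCLE_apply,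
      norm_toLp_sq_eq_dotProduct_self, inner_toEuclideanCLM, RCLike.re_to_real, WithLp.ofLp_sub]
    using energy_error_residual_bounds_general (toEuclideanCLE A hA.isUnit)
      (isPositive_toEuclideanCLM_iff.mpr hA.posSemidef) (.toLp 2 b) (.toLp 2 z) (.toLp 2 x)
      (.toLp 2 r) (congrArg (WithLp.toLp 2) hx) (congrArg (WithLp.toLp 2) hr)
end

section
/- Let W be a real inner product space, let g, t ∈ W, and let a, C, β be real numbers with a ≥ 0, C ≥ 0, β > C, and ‖g‖² ≤ C·a. If a > 0 or t ≠ 0, then a − 2⟨g,t⟩ + β‖t‖² > 0. -/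
open RealInnerProductSpace

section Nitsche

variable {𝕜 W : Type*} [RCLike 𝕜] [SeminormedAddCommGroup W] [InnerProductSpace 𝕜 W]

theorem two_mul_re_inner_le_add_mul_norm_sq (x y : W) {δ : ℝ} (hδ : 0 < δ) :
    2 * RCLike.re (inner 𝕜 x y) ≤ δ⁻¹ * ‖x‖ ^ 2 + δ * ‖y‖ ^ 2 :=
  calc
    2 * RCLike.re (inner 𝕜 x y) ≤ 2 * (‖x‖ * ‖y‖) := by
      gcongr
      exact re_inner_le_norm x y
    _ = 2 * ‖y‖ * ‖x‖ := by ring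
    _ ≤ δ * ‖y‖ ^ 2 + δ⁻¹ * ‖x‖ ^ 2 := two_mul_le_add_mul_sq hδ
    _ = δ⁻¹ * ‖x‖ ^ 2 + δ * ‖y‖ ^ 2 := add_comm _ _

theorem nitsche_lower_bound {g t : W} {a C δ : ℝ} (β : ℝ) (hδ : 0 < δ)
    (hg : ‖g‖ ^ 2 ≤ C * a) :
    (1 - C / δ) * a + (β - δ) * ‖t‖ ^ 2 ≤
      a - 2 * RCLike.re (inner 𝕜 g t) + β * ‖t‖ ^ 2 := by
  have hinner : 2 * RCLike.re (inner 𝕜 g t) ≤ C / δ * a + δ * ‖t‖ ^ 2 :=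
    calc
      2 * RCLike.re (inner 𝕜 g t) ≤ δ⁻¹ * ‖g‖ ^ 2 + δ * ‖t‖ ^ 2 :=
        two_mul_re_inner_le_add_mul_norm_sq g t hδ
      _ ≤ δ⁻¹ * (C * a) + δ * ‖t‖ ^ 2 := by gcongr
      _ = C / δ * a + δ * ‖t‖ ^ 2 := by ring
  linarith

theorem nitsche_coercivity_general {g t : W} {a C β : ℝ} (ha : 0 ≤ a) (hC : 0 ≤ C)
    (hβ : C < β) (hg : ‖g‖ ^ 2 ≤ C * a) (hpos : 0 < a ∨ 0 < ‖t‖) :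
    0 < a - 2 * RCLike.re (inner 𝕜 g t) + β * ‖t‖ ^ 2 := by
  -- A Young weight strictly between `C` and `β` absorbs the cross term while leaving
  -- positive multiples of both `a` and `‖t‖ ^ 2`.
  obtain ⟨δ, hCδ, hδβ⟩ := exists_between hβ
  have hδ : 0 < δ := hC.trans_lt hCδ
  have hcoeff_a : 0 < 1 - C / δ := sub_pos.mpr ((div_lt_one hδ).mpr hCδ)
  have hcoeff_t : 0 < β - δ := sub_pos.mpr hδβ
  refine lt_of_lt_of_le ?_ (nitsche_lower_bound β hδ hg)
  rcases hpos with ha_pos | ht_pos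
  · exact add_pos_of_pos_of_nonneg (mul_pos hcoeff_a ha_pos)
      (mul_nonneg hcoeff_t.le (sq_nonneg ‖t‖))
  · exact add_pos_of_nonneg_of_pos (mul_nonneg hcoeff_a.le ha)
      (mul_pos hcoeff_t (pow_pos ht_pos 2))

end Nitsche

/-- **Coercivity of the Nitsche cell bilinear form.** In a real inner product space,
if `‖g‖² ≤ C·a` with `a, C ≥ 0` and the penalty parameter satisfies `β > C`, then
whenever `a > 0` or `t ≠ 0` one has `a − 2⟨g,t⟩ + β‖t‖² > 0`. -/
theorem nitsche_coercivity
    {W : Type*} [NormedAddCommGroup W] [InnerProductSpace ℝ W]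
    (g t : W) (a C β : ℝ) (ha : 0 ≤ a) (hC : 0 ≤ C) (hβ : β > C)
    (hg : ‖g‖ ^ 2 ≤ C * a) (hnz : 0 < a ∨ t ≠ 0) :
    0 < a - 2 * ⟪g, t⟫ + β * ‖t‖ ^ 2 :=
  nitsche_coercivity_general (𝕜 := ℝ) ha hC hβ hg (hnz.imp_right norm_pos_iff.mpr)
end
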